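/- arXiv:1312.6445 — 2 statements merged into one kernel-verified Lean document; each statement's English description precedes it below -/
import Mathlib

section
/- Let S and k be positive integers, and for each i ∈ {1, …, S} let nᵢ be a positive integer, let Mⁱ, Cⁱ, Kⁱ be nᵢ×nᵢ real matrices with Mⁱ and Kⁱ symmetric, let Lⁱ be a k×nᵢ real matrix, let Fⁱ : ℝ → ℝ^{nᵢ}, let λ : ℝ → ℝᵏ, and let Uⁱ : ℝ → ℝ^{nᵢ} be twice differentiable with Mⁱ·(Uⁱ)''(t) + Cⁱ·(Uⁱ)'(t) + Kⁱ·Uⁱ(t) = Fⁱ(t) − (Lⁱ)ᵀ·λ(t) for all t, and suppose the velocity continuity condition ∑_{i=1}^{S} Lⁱ·(Uⁱ)'(t) = 0 holds for all t. Then the total energy E(t) = ∑_{i=1}^{S} [(1/2)·(Uⁱ)'(t)ᵀ·Mⁱ·(Uⁱ)'(t) + (1/2)·Uⁱ(t)ᵀ·Kⁱ·Uⁱ(t)] satisfies E'(t) = ∑_{i=1}^{S} [(Uⁱ)'(t)ᵀ·Fⁱ(t) − (Uⁱ)'(t)ᵀ·Cⁱ·(Uⁱ)'(t)] for all t; in particular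 the Lagrange multipliers contribute no energy to the coupled system. -/
/-!
Differentiating the energy of each sub-domain gives `(Uⁱ)' ⬝ᵥ (Mⁱ (Uⁱ)'' + Kⁱ Uⁱ)`, by symmetry of
`Mⁱ` and `Kⁱ` (`hasDerivAt_half_quadForm`). The equation of motion replaces the bracket by
`Fⁱ - Cⁱ (Uⁱ)' - (Lⁱ)ᵀ λ`. The multiplier terms sum to the power `(∑ i, Lⁱ (Uⁱ)') ⬝ᵥ λ`, which
vanishes by velocity continuity.
-/

open Matrix

/-- Differentiating a symmetric quadratic form along a curve: symmetry of `A` merges the two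
product-rule terms, which cancels the factor `1 / 2`. -/
theorem hasDerivAt_half_quadForm {m : ℕ} (A : Matrix (Fin m) (Fin m) ℝ) (hA : A.IsSymm)
    {u : ℝ → Fin m → ℝ} {u' : Fin m → ℝ} {t : ℝ} (hu : HasDerivAt u u' t) :
    HasDerivAt (fun s => (1 / 2) * (u s ⬝ᵥ A.mulVec (u s))) (u t ⬝ᵥ A.mulVec u') t := by
  have hc : ∀ i, HasDerivAt (fun s => u s i) (u' i) t := hasDerivAt_pi.1 hu
  have hAu : ∀ i, HasDerivAt (fun s => A.mulVec (u s) i) (A.mulVec u' i) t := fun i => by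
    simp only [mulVec, dotProduct]
    exact HasDerivAt.fun_sum fun j _ => (hc j).const_mul (A i j)
  have h : HasDerivAt (fun s => u s ⬝ᵥ A.mulVec (u s))
      (u' ⬝ᵥ A.mulVec (u t) + u t ⬝ᵥ A.mulVec u') t := by
    simp only [dotProduct, ← Finset.sum_add_distrib]
    exact HasDerivAt.fun_sum fun i _ => (hc i).mul (hAu i)
  have hsymm : u' ⬝ᵥ A.mulVec (u t) = u t ⬝ᵥ A.mulVec u' := by
    rw [dotProduct_mulVec, ← mulVec_transpose, hA.eq, dotProduct_comm]
  exact (h.const_mul (1 / 2)).congr_deriv (by rw [hsymm]; ring)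

/-- Global energy balance of the coupled continuous-time MGMT system
(Eqs. (10)–(11) of the paper): under the sub-domain equations of motion with
Lagrange multiplier interface reactions and the velocity continuity condition,
the Lagrange multipliers contribute no energy, so the total energy satisfies
`E'(t) = ∑ᵢ [(Uⁱ)'(t)ᵀ·Fⁱ(t) − (Uⁱ)'(t)ᵀ·Cⁱ·(Uⁱ)'(t)]`. -/
theorem global_energy_balance_coupled_system
    (S k : ℕ) (hS : 0 < S) (hk : 0 < k)
    (n : Fin S → ℕ) (hn : ∀ i, 0 < n i)
    (M C K : ∀ i : Fin S, Matrix (Fin (n i)) (Fin (n i)) ℝ)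
    (hM : ∀ i, (M i).IsSymm) (hK : ∀ i, (K i).IsSymm)
    (L : ∀ i : Fin S, Matrix (Fin k) (Fin (n i)) ℝ)
    (F : ∀ i : Fin S, ℝ → (Fin (n i) → ℝ))
    (lam : ℝ → (Fin k → ℝ))
    (U : ∀ i : Fin S, ℝ → (Fin (n i) → ℝ))
    (hU : ∀ i, Differentiable ℝ (U i))
    (hU' : ∀ i, Differentiable ℝ (deriv (U i)))
    (heq : ∀ i, ∀ t : ℝ,
      (M i).mulVec (deriv (deriv (U i)) t) + (C i).mulVec (deriv (U i) t)
        + (K i).mulVec (U i t) = F i t - (L i)ᵀ.mulVec (lam t))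
    (hcont : ∀ t : ℝ, ∑ i : Fin S, (L i).mulVec (deriv (U i) t) = 0) :
    ∀ t : ℝ,
      deriv (fun s : ℝ => ∑ i : Fin S,
          ((1 / 2) * (deriv (U i) s ⬝ᵥ (M i).mulVec (deriv (U i) s))
            + (1 / 2) * (U i s ⬝ᵥ (K i).mulVec (U i s)))) t
        = ∑ i : Fin S,
            (deriv (U i) t ⬝ᵥ F i t - deriv (U i) t ⬝ᵥ (C i).mulVec (deriv (U i) t)) := by
  intro t
  have hE := HasDerivAt.fun_sum (u := Finset.univ) fun i _ =>
    (hasDerivAt_half_quadForm (M i) (hM i) (hU' i t).hasDerivAt).add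
      (hasDerivAt_half_quadForm (K i) (hK i) (hU i t).hasDerivAt)
  refine hE.deriv.trans ?_
  -- The total power of the interface reactions is zero.
  have hlam : ∑ i, deriv (U i) t ⬝ᵥ (L i)ᵀ.mulVec (lam t) = 0 := by
    simp only [mulVec_transpose, dotProduct_comm _ (vecMul _ _), ← dotProduct_mulVec]
    rw [← dotProduct_sum, hcont t, dotProduct_zero]
  rw [← sub_zero (∑ i, (deriv (U i) t ⬝ᵥ F i t - _)), ← hlam, ← Finset.sum_sub_distrib]
  refine Finset.sum_congr rfl fun i _ => ?_
  have h := congrArg (fun v => deriv (U i) t ⬝ᵥ v) (heq i t)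
  simp only [dotProduct_add, dotProduct_sub] at h
  have hsymm : U i t ⬝ᵥ (K i).mulVec (deriv (U i) t)
      = deriv (U i) t ⬝ᵥ (K i).mulVec (U i t) := by
    rw [dotProduct_mulVec, ← mulVec_transpose, (hK i).eq, dotProduct_comm]
  linarith
end

section
/- Let S and k be positive integers and ΔT > 0 a real number. For each i ∈ {1, …, S}, let nᵢ and ξᵢ be positive integers, set Δtᵢ = ΔT/ξᵢ, let Lⁱ be a k×nᵢ real matrix, and let U̇ⁱ_0, U̇ⁱ_1, …, U̇ⁱ_{ξᵢ} ∈ ℝ^{nᵢ} be the sub-domain velocity vectors at the intermediate sub-time-steps. Let λₙ, λ_{n+1} ∈ ℝᵏ, and for each i and each integer η with 0 ≤ η ≤ ξᵢ define λ_η = (1 − η/ξᵢ)·λₙ + (η/ξᵢ)·λ_{n+1}. Suppose the velocity continuity conditions ∑_{i=1}^{S} Lⁱ·U̇ⁱ_0 = 0 and ∑_{i=1}^{S} Lⁱ·U̇ⁱ_{ξᵢ} = 0 hold at the two global time steps. Then the total interface energy over the global time step vanishes identically: ∑_{i=1}^{S} ∑_{η=1}^{ξᵢ} (1/Δtᵢ)·(U̇ⁱ_η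 − U̇ⁱ_{η−1})ᵀ·(Lⁱ)ᵀ·(λ_η − λ_{η−1}) = 0. -/
/-!
Linear interpolation makes every multiplier increment on sub-domain `i` equal to
`(1 / ξ i) • (lamnext - lamn)`, and `(1 / Δt i) * (1 / ξ i) = 1 / ΔT` does not depend on `i`.
The sum over the sub-steps therefore telescopes
(`sum_Icc_sub_pred`, `subdomain_interface_energy`) to
`(1 / ΔT) * ((L i *ᵥ (U' i (ξ i) - U' i 0)) ⬝ᵥ (lamnext - lamn))`. Summed over `i`, the first
factor of the dot product is the difference of the two velocity continuity conditions, hence zero.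
-/

open Matrix

theorem sum_Icc_sub_pred {M : Type*} [AddCommGroup M] (f : ℕ → M) (m : ℕ) :
    ∑ η ∈ Finset.Icc 1 m, (f η - f (η - 1)) = f m - f 0 := by
  induction m with
  | zero => simp
  | succ m ih =>
    rw [Finset.sum_Icc_succ_top (by omega), ih, Nat.add_sub_cancel]
    abel

/-- The interface energy of a single sub-domain depends only on its velocities at the two global
time steps, with a prefactor `1 / ΔT` common to all sub-domains. -/
theorem subdomain_interface_energy {k n ξ : ℕ} (hξ : 0 < ξ) (ΔT : ℝ)
    (L : Matrix (Fin k) (Fin n) ℝ) (u : ℕ → Fin n → ℝ) (a b : Fin k → ℝ) (lam : ℕ → Fin k → ℝ)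
    (hlam : ∀ η ≤ ξ, lam η = (1 - (η : ℝ) / (ξ : ℝ)) • a + ((η : ℝ) / (ξ : ℝ)) • b) :
    ∑ η ∈ Finset.Icc 1 ξ,
        (1 / (ΔT / (ξ : ℝ))) * ((u η - u (η - 1)) ⬝ᵥ Lᵀ.mulVec (lam η - lam (η - 1)))
      = (1 / ΔT) * ((L.mulVec (u ξ) - L.mulVec (u 0)) ⬝ᵥ (b - a)) := by
  have hξ' : (ξ : ℝ) ≠ 0 := by exact_mod_cast hξ.ne'
  have step : ∀ η ∈ Finset.Icc 1 ξ,
      (1 / (ΔT / (ξ : ℝ))) * ((u η - u (η - 1)) ⬝ᵥ Lᵀ.mulVec (lam η - lam (η - 1)))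
        = (1 / ΔT) * ((u η - u (η - 1)) ⬝ᵥ Lᵀ.mulVec (b - a)) := by
    intro η hη
    obtain ⟨h1, h2⟩ := Finset.mem_Icc.mp hη
    have hinc : lam η - lam (η - 1) = (1 / (ξ : ℝ)) • (b - a) := by
      rw [hlam η h2, hlam (η - 1) (by omega), Nat.cast_sub h1]
      ext j
      simp only [Pi.sub_apply, Pi.add_apply, Pi.smul_apply, smul_eq_mul, Nat.cast_one]
      ring
    rw [hinc, mulVec_smul, dotProduct_smul, smul_eq_mul, ← mul_assoc]
    congr 1
    field_simp
  rw [Finset.sum_congr rfl step, ← Finset.mul_sum, ← sum_dotProduct, sum_Icc_sub_pred,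
    mulVec_transpose, dotProduct_comm, ← dotProduct_mulVec, dotProduct_comm, mulVec_sub]

/-- Main stability result of the MGMT method (Eqs. (58)–(65) of the paper):
with sub-domain time steps `Δtᵢ = ΔT/ξᵢ` and linearly interpolated
intermediate Lagrange multipliers, if the velocity continuity conditions hold
at the two global time steps, then the total interface energy over the global
time step vanishes identically. -/
theorem mgmt_interface_energy_vanishes
    (S k : ℕ) (hS : 0 < S) (hk : 0 < k)
    (ΔT : ℝ) (hΔT : 0 < ΔT)
    (n : Fin S → ℕ) (hn : ∀ i, 0 < n i)
    (ξ : Fin S → ℕ) (hξ : ∀ i, 0 < ξ i)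
    (Δt : Fin S → ℝ) (hΔt : ∀ i, Δt i = ΔT / (ξ i : ℝ))
    (L : ∀ i : Fin S, Matrix (Fin k) (Fin (n i)) ℝ)
    (U' : ∀ i : Fin S, ℕ → (Fin (n i) → ℝ))
    (lamn lamnext : Fin k → ℝ)
    (lam : ∀ _i : Fin S, ℕ → (Fin k → ℝ))
    (hlam : ∀ i : Fin S, ∀ η : ℕ, η ≤ ξ i →
      lam i η = (1 - (η : ℝ) / (ξ i : ℝ)) • lamn
        + ((η : ℝ) / (ξ i : ℝ)) • lamnext)
    (hcont0 : ∑ i : Fin S, (L i).mulVec (U' i 0) = 0)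
    (hcontξ : ∑ i : Fin S, (L i).mulVec (U' i (ξ i)) = 0) :
    ∑ i : Fin S, ∑ η ∈ Finset.Icc 1 (ξ i),
        (1 / Δt i) *
          ((U' i η - U' i (η - 1)) ⬝ᵥ (L i)ᵀ.mulVec (lam i η - lam i (η - 1)))
      = 0 := by
  simp only [hΔt]
  rw [Finset.sum_congr rfl fun i _ =>
      subdomain_interface_energy (hξ i) ΔT (L i) (U' i) lamn lamnext (lam i) (hlam i),
    ← Finset.mul_sum, ← sum_dotProduct, Finset.sum_sub_distrib, hcont0, hcontξ, sub_zero,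
    zero_dotProduct, mul_zero]
end
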